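/- Assume M = Q and X̄₀^red ∈ ℝ^{Q×Q} is invertible, and let λ₋ ≥ 0 be the smallest eigenvalue of the positive semidefinite symmetric matrix Δ₂^rel. Then ‖(1 + Δ₂^rel)⁻¹‖_op = (1 + λ₋)⁻¹ ≤ 1, Tr( Y·Δ₂^rel·(1 + Δ₂^rel)⁻¹·Yᵀ ) ≤ (1 + λ₋)⁻¹·‖Y·Δ₁^rel‖²_{L²_𝒩}, and consequently ‖Y^ext·𝒫^⊥‖_{L²_𝒩} ≤ ‖Y·(X̄₀^red)⁻¹·ΔX₀‖_{L²_𝒩}. -/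

import Mathlib

/-!
Write `J` for the `Q × N` class indicator matrix. Multiplying a matrix on the right by `𝒩⁻¹ Jᵀ`
takes class means, so `J 𝒩⁻¹ Jᵀ = 1`, while `Δ₁ 𝒩⁻¹ Jᵀ = 0` because deviations from the class means
average to zero. In the coordinates `X₀ = X̄₀^red (J + Δ₁)` the Gram matrix of `J + Δ₁` is therefore
`1 + Δ₂`. Since `𝒫` depends only on the row space of `X₀`, and `Y^ext = Y J`, this gives
`‖Y^ext 𝒫^⊥‖² = Tr(Y (1 - (1 + Δ₂)⁻¹) Yᵀ) = Tr(Y Δ₂ (1 + Δ₂)⁻¹ Yᵀ)`.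

Everything else is functional calculus for `Δ₂`: on its spectrum `t ≥ λ₋ ≥ 0`, so
`(1 + t)⁻¹ ≤ (1 + λ₋)⁻¹` with equality at `t = λ₋`, and `t (1 + t)⁻¹ ≤ (1 + λ₋)⁻¹ t`.
-/

open Matrix

noncomputable section

/-- Index type for training inputs: class `j ∈ {1,…,Q}` and sample `i ∈ {1,…,N_j}`. -/
abbrev Idx (Q : ℕ) (Nc : Fin Q → ℕ) : Type := (j : Fin Q) × Fin (Nc j)

/-- The matrix `X̄₀^red ∈ ℝ^{M×Q}` of class means `x̄_{0,j} = (1/N_j)·Σ_i x_{0,j,i}`. -/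
def classMeans {Q M : ℕ} (Nc : Fin Q → ℕ) (X : Matrix (Fin M) (Idx Q Nc) ℝ) :
    Matrix (Fin M) (Fin Q) ℝ :=
  Matrix.of fun m j => (Nc j : ℝ)⁻¹ * ∑ i : Fin (Nc j), X m ⟨j, i⟩

/-- The matrix `X̄₀ ∈ ℝ^{M×N}` with column `x̄_{0,j}` at each position of class `j`. -/
def barX {Q M : ℕ} (Nc : Fin Q → ℕ) (X : Matrix (Fin M) (Idx Q Nc) ℝ) :
    Matrix (Fin M) (Idx Q Nc) ℝ :=
  Matrix.of fun m p => classMeans Nc X m p.1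

/-- The deviation matrix `ΔX₀ := X₀ − X̄₀`. -/
def deltaX {Q M : ℕ} (Nc : Fin Q → ℕ) (X : Matrix (Fin M) (Idx Q Nc) ℝ) :
    Matrix (Fin M) (Idx Q Nc) ℝ := X - barX Nc X

/-- The block-diagonal weight matrix `𝒩 = diag(N_j·1_{N_j×N_j})`. -/
def calN (Q : ℕ) (Nc : Fin Q → ℕ) : Matrix (Idx Q Nc) (Idx Q Nc) ℝ :=
  Matrix.diagonal fun p => (Nc p.1 : ℝ)

/-- The extended target matrix `Y^ext ∈ ℝ^{Q×N}`: column `y_j` at each position of class `j`. -/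
def Yext {Q : ℕ} (Nc : Fin Q → ℕ) (Y : Matrix (Fin Q) (Fin Q) ℝ) :
    Matrix (Fin Q) (Idx Q Nc) ℝ :=
  Matrix.of fun q p => Y q p.1

/-- Entrywise ReLU on matrices: `σ(A)_{kl} = max(0, A_{kl})`. -/
def relu {m n : Type*} (A : Matrix m n ℝ) : Matrix m n ℝ :=
  Matrix.of fun i j => max 0 (A i j)

/-- Euclidean norm of a vector in `ℝ^k`. -/
def enorm {k : ℕ} (v : Fin k → ℝ) : ℝ := Real.sqrt (∑ i, (v i) ^ 2)

/-- Frobenius (Hilbert–Schmidt) norm `‖B‖_F = √Tr(BBᵀ)`. -/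
def frob {m n : Type*} [Fintype m] [Fintype n] (A : Matrix m n ℝ) : ℝ :=
  Real.sqrt (Matrix.trace (A * Aᵀ))

/-- The replicated-bias matrix `b·u_Nᵀ ∈ ℝ^{M×N}`. -/
def colRep {Q M : ℕ} (Nc : Fin Q → ℕ) (b : Fin M → ℝ) : Matrix (Fin M) (Idx Q Nc) ℝ :=
  Matrix.of fun m _ => b m

/-- The weighted `L²_𝒩` norm `‖A‖ = √Tr(A𝒩⁻¹Aᵀ)`. -/
def l2N {Q M : ℕ} (Nc : Fin Q → ℕ) (A : Matrix (Fin M) (Idx Q Nc) ℝ) : ℝ :=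
  Real.sqrt (Matrix.trace (A * (calN Q Nc)⁻¹ * Aᵀ))

/-- `ℓ²→ℓ²` operator norm of a matrix. -/
def opNorm {m n : ℕ} (A : Matrix (Fin m) (Fin n) ℝ) : ℝ :=
  ‖LinearMap.toContinuousLinearMap (Matrix.toEuclideanLin A)‖

/-- `Δ₁^rel := (X̄₀^red)⁻¹ · ΔX₀`. -/
def Del1 {Q : ℕ} (Nc : Fin Q → ℕ) (X₀ : Matrix (Fin Q) (Idx Q Nc) ℝ) :
    Matrix (Fin Q) (Idx Q Nc) ℝ :=
  (classMeans Nc X₀)⁻¹ * deltaX Nc X₀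

/-- `Δ₂^rel := Δ₁^rel · 𝒩⁻¹ · (Δ₁^rel)ᵀ`. -/
def Del2 {Q : ℕ} (Nc : Fin Q → ℕ) (X₀ : Matrix (Fin Q) (Idx Q Nc) ℝ) :
    Matrix (Fin Q) (Fin Q) ℝ :=
  Del1 Nc X₀ * (calN Q Nc)⁻¹ * (Del1 Nc X₀)ᵀ

/-- The projector `𝒫 := 𝒩⁻¹X₀ᵀ(X₀𝒩⁻¹X₀ᵀ)⁻¹X₀`. -/
def Pmat {Q M : ℕ} (Nc : Fin Q → ℕ) (X₀ : Matrix (Fin M) (Idx Q Nc) ℝ) :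
    Matrix (Idx Q Nc) (Idx Q Nc) ℝ :=
  (calN Q Nc)⁻¹ * X₀ᵀ * (X₀ * (calN Q Nc)⁻¹ * X₀ᵀ)⁻¹ * X₀

section LeastSpectralValue

open scoped Ring

lemma isLeast_spectrum_algebraMap_add {R A : Type*} [CommRing R] [PartialOrder R]
    [IsOrderedAddMonoid R] [Ring A] [Algebra R A] {a : A} {r : R} (h : IsLeast (spectrum R a) r)
    (s : R) : IsLeast (spectrum R (algebraMap R A s + a)) (s + r) := by
  rw [← spectrum.singleton_add_eq, Set.singleton_add]
  exact (add_right_mono (a := s)).map_isLeast h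

lemma norm_ringInverse_eq_of_isLeast_spectrum {A : Type*} [NormedRing A] [StarRing A]
    [NormedAlgebra ℝ A] [IsometricContinuousFunctionalCalculus ℝ A IsSelfAdjoint] {a : A} {r : ℝ}
    (ha : IsSelfAdjoint a) (h : IsLeast (spectrum ℝ a) r) (hr : 0 < r) : ‖a⁻¹ʳ‖ = r⁻¹ := by
  have hpos : ∀ x ∈ spectrum ℝ a, 0 < x := fun x hx => hr.trans_le (h.2 hx)
  have hcont : ContinuousOn (fun x : ℝ => x⁻¹) (spectrum ℝ a) :=
    continuousOn_inv₀.mono fun x hx => (hpos x hx).ne'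
  have hunit : IsUnit a := spectrum.isUnit_of_zero_notMem ℝ fun h0 => (hpos 0 h0).false
  rw [← cfc_ringInverse_id (R := ℝ) a hunit ha]
  apply le_antisymm
  · refine norm_cfc_le (inv_nonneg.2 hr.le) fun x hx => ?_
    rw [Real.norm_of_nonneg (inv_nonneg.2 (hpos x hx).le)]
    exact inv_anti₀ hr (h.2 hx)
  · calc r⁻¹ = ‖r⁻¹‖ := (Real.norm_of_nonneg (inv_nonneg.2 hr.le)).symm
      _ ≤ _ := norm_apply_le_norm_cfc (fun x : ℝ => x⁻¹) a h.1 hcont ha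

lemma mul_ringInverse_one_add_le_smul {A : Type*} [TopologicalSpace A] [Ring A] [StarRing A]
    [PartialOrder A] [StarOrderedRing A] [Algebra ℝ A]
    [ContinuousFunctionalCalculus ℝ A IsSelfAdjoint] {a : A} {r : ℝ} (ha : IsSelfAdjoint a)
    (h : r ∈ lowerBounds (spectrum ℝ a)) (hr : 0 ≤ r) :
    a * (1 + a)⁻¹ʳ ≤ (1 + r)⁻¹ • a := by
  have hpos : ∀ t ∈ spectrum ℝ a, 0 < 1 + t := fun t ht => by linarith [h ht]
  have hcont : ContinuousOn (fun t : ℝ => (1 + t)⁻¹) (spectrum ℝ a) :=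
    ContinuousOn.inv₀ (by fun_prop) fun t ht => (hpos t ht).ne'
  have hinv : cfc (fun t : ℝ => (1 + t)⁻¹) a = (1 + a)⁻¹ʳ := by
    rw [cfc_inv (fun t : ℝ => 1 + t) a fun t ht => (hpos t ht).ne', cfc_const_add 1 _ a,
      cfc_id' ℝ a, map_one]
  have hbound : ∀ t ∈ spectrum ℝ a, t * (1 + t)⁻¹ ≤ (1 + r)⁻¹ * t := fun t ht => by
    rw [mul_comm t]
    exact mul_le_mul_of_nonneg_right (inv_anti₀ (by linarith) (by linarith [h ht]))
      (hr.trans (h ht))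
  calc a * (1 + a)⁻¹ʳ = cfc (fun t : ℝ => t * (1 + t)⁻¹) a := by
        rw [cfc_mul (fun t : ℝ => t) (fun t : ℝ => (1 + t)⁻¹) a, cfc_id' ℝ a, hinv]
    _ ≤ cfc (fun t : ℝ => (1 + r)⁻¹ * t) a := cfc_mono hbound
    _ = (1 + r)⁻¹ • a := by rw [cfc_const_mul_id (1 + r)⁻¹ a]

end LeastSpectralValue

section SpectralMatrixBounds

open scoped Ring ComplexOrder MatrixOrder

lemma trace_mul_mul_conjTranspose_mono {m n 𝕜 : Type*} [Fintype m] [Fintype n] [RCLike 𝕜]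
    {A B : Matrix n n 𝕜} (h : A ≤ B) (Y : Matrix m n 𝕜) :
    trace (Y * A * Yᴴ) ≤ trace (Y * B * Yᴴ) := by
  have := ((Matrix.le_iff.1 h).mul_mul_conjTranspose_same Y).trace_nonneg
  rwa [Matrix.mul_sub, Matrix.sub_mul, trace_sub, sub_nonneg] at this

open scoped Matrix.Norms.L2Operator in
lemma opNorm_inv_one_add {n : ℕ} {D : Matrix (Fin n) (Fin n) ℝ} {r : ℝ} (hD : D.IsHermitian)
    (h : IsLeast (spectrum ℝ D) r) (hr : -1 < r) : opNorm (1 + D)⁻¹ = (1 + r)⁻¹ := by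
  have hleast : IsLeast (spectrum ℝ (1 + D)) (1 + r) := by
    simpa only [map_one] using isLeast_spectrum_algebraMap_add h 1
  calc opNorm (1 + D)⁻¹ = ‖(1 + D)⁻¹ʳ‖ := by rw [← nonsing_inv_eq_ringInverse]; rfl
    _ = (1 + r)⁻¹ := norm_ringInverse_eq_of_isLeast_spectrum
        ((IsSelfAdjoint.one _).add hD) hleast (by linarith)

lemma trace_mul_inv_one_add_le {m n : Type*} [Fintype m] [Fintype n] [DecidableEq n]
    {D : Matrix n n ℝ} {r : ℝ} (hD : D.IsHermitian) (h : r ∈ lowerBounds (spectrum ℝ D))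
    (hr : 0 ≤ r) (Y : Matrix m n ℝ) :
    trace (Y * D * (1 + D)⁻¹ * Yᵀ) ≤ (1 + r)⁻¹ * trace (Y * D * Yᵀ) := by
  have hle : D * (1 + D)⁻¹ ≤ (1 + r)⁻¹ • D := by
    rw [nonsing_inv_eq_ringInverse]
    exact mul_ringInverse_one_add_le_smul hD h hr
  simpa only [conjTranspose_eq_transpose_of_trivial, Matrix.mul_smul, Matrix.smul_mul, trace_smul,
    smul_eq_mul, ← Matrix.mul_assoc] using trace_mul_mul_conjTranspose_mono hle Y

end SpectralMatrixBounds

section RowSpaceProjection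

variable {m ι R : Type*} [Fintype m] [DecidableEq m] [Fintype ι] [CommRing R]
  {W : Matrix ι ι R} {X : Matrix m ι R}

/-- The matrix `W Xᵀ (X W Xᵀ)⁻¹ X` whose right action on row vectors is the projection onto the row
space of `X`, orthogonal for the bilinear form with symmetric Gram matrix `W`. It is meaningful only
when `X W Xᵀ` is invertible. -/
def rowSpaceProj (W : Matrix ι ι R) (X : Matrix m ι R) : Matrix ι ι R :=
  W * Xᵀ * (X * W * Xᵀ)⁻¹ * X

lemma rowSpaceProj_unit_mul {C : Matrix m m R} (hC : IsUnit C) (W : Matrix ι ι R)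
    (X : Matrix m ι R) : rowSpaceProj W (C * X) = rowSpaceProj W X := by
  have hdet : IsUnit C.det := (Matrix.isUnit_iff_isUnit_det C).1 hC
  have hgram : C * X * W * (C * X)ᵀ = C * (X * W * Xᵀ) * Cᵀ := by
    simp only [transpose_mul, Matrix.mul_assoc]
  calc rowSpaceProj W (C * X)
      = W * Xᵀ * (Cᵀ * Cᵀ⁻¹) * (X * W * Xᵀ)⁻¹ * (C⁻¹ * C) * X := by
        rw [rowSpaceProj, hgram, Matrix.mul_inv_rev, Matrix.mul_inv_rev, transpose_mul]
        simp only [Matrix.mul_assoc]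
    _ = rowSpaceProj W X := by
        rw [mul_nonsing_inv _ (isUnit_det_transpose C hdet), nonsing_inv_mul _ hdet, Matrix.mul_one,
          Matrix.mul_one, rowSpaceProj]

lemma isIdempotentElem_rowSpaceProj (h : IsUnit (X * W * Xᵀ)) :
    IsIdempotentElem (rowSpaceProj W X) := by
  have hdet : IsUnit (X * W * Xᵀ).det := (Matrix.isUnit_iff_isUnit_det _).1 h
  calc rowSpaceProj W X * rowSpaceProj W X
      = W * Xᵀ * ((X * W * Xᵀ)⁻¹ * (X * W * Xᵀ)) * (X * W * Xᵀ)⁻¹ * X := by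
        simp only [rowSpaceProj, Matrix.mul_assoc]
    _ = rowSpaceProj W X := by rw [nonsing_inv_mul _ hdet, Matrix.mul_one, rowSpaceProj]

lemma mul_transpose_rowSpaceProj (hW : W.IsSymm) :
    W * (rowSpaceProj W X)ᵀ = rowSpaceProj W X * W := by
  simp only [rowSpaceProj, transpose_mul, transpose_nonsing_inv, transpose_transpose, hW.eq,
    Matrix.mul_assoc]

lemma one_sub_rowSpaceProj_mul_mul_transpose [DecidableEq ι] (hW : W.IsSymm)
    (h : IsUnit (X * W * Xᵀ)) :
    (1 - rowSpaceProj W X) * W * (1 - rowSpaceProj W X)ᵀ = (1 - rowSpaceProj W X) * W := by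
  rw [Matrix.mul_assoc, transpose_sub, transpose_one, Matrix.mul_sub,
    mul_transpose_rowSpaceProj hW, Matrix.mul_one, ← one_sub_mul, ← Matrix.mul_assoc,
    (isIdempotentElem_rowSpaceProj h).one_sub.eq]

end RowSpaceProjection

section ClassMeans

variable {Q M : ℕ} {Nc : Fin Q → ℕ}

/-- The `Q × N` matrix `J` whose row `j` is the indicator of class `j`. It turns a matrix with one
column per class into the matrix repeating that column over the class. -/
def classIndicator (Nc : Fin Q → ℕ) : Matrix (Fin Q) (Idx Q Nc) ℝ :=
  Matrix.of fun j p => if j = p.1 then 1 else 0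

lemma mul_classIndicator_apply (A : Matrix (Fin M) (Fin Q) ℝ) (i : Fin M) (p : Idx Q Nc) :
    (A * classIndicator Nc) i p = A i p.1 := by
  simp [classIndicator, mul_apply]

lemma Yext_eq_mul_classIndicator (Y : Matrix (Fin Q) (Fin Q) ℝ) :
    Yext Nc Y = Y * classIndicator Nc :=
  Matrix.ext fun i p => (mul_classIndicator_apply Y i p).symm

lemma barX_eq_classMeans_mul_classIndicator (X : Matrix (Fin M) (Idx Q Nc) ℝ) :
    barX Nc X = classMeans Nc X * classIndicator Nc :=
  Matrix.ext fun i p => (mul_classIndicator_apply (classMeans Nc X) i p).symm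

lemma posSemidef_calN_inv : ((calN Q Nc)⁻¹).PosSemidef :=
  (PosSemidef.diagonal fun p : Idx Q Nc => (Nc p.1).cast_nonneg).inv

lemma isSymm_calN_inv : ((calN Q Nc)⁻¹).IsSymm := posSemidef_calN_inv.isHermitian

lemma calN_inv_eq_diagonal :
    (calN Q Nc)⁻¹ = diagonal fun p : Idx Q Nc => (Nc p.1 : ℝ)⁻¹ := by
  refine inv_eq_right_inv ?_
  rw [calN, diagonal_mul_diagonal, ← diagonal_one]
  congr 1
  funext p
  exact mul_inv_cancel₀ (Nat.cast_ne_zero.2 (Fin.pos p.2).ne')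

lemma mul_calN_inv_mul_classIndicator_transpose (X : Matrix (Fin M) (Idx Q Nc) ℝ) :
    X * (calN Q Nc)⁻¹ * (classIndicator Nc)ᵀ = classMeans Nc X := by
  ext m j
  rw [calN_inv_eq_diagonal, mul_apply, Fintype.sum_sigma, Finset.sum_eq_single j]
  · simp [classIndicator, classMeans, Finset.mul_sum, mul_comm]
  · intro k _ hkj
    simp [classIndicator, hkj.symm]
  · simp

lemma classMeans_mul {k : ℕ} (A : Matrix (Fin k) (Fin M) ℝ) (X : Matrix (Fin M) (Idx Q Nc) ℝ) :
    classMeans Nc (A * X) = A * classMeans Nc X := by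
  simp only [← mul_calN_inv_mul_classIndicator_transpose, Matrix.mul_assoc]

lemma classMeans_classIndicator (hNc : ∀ j, 0 < Nc j) :
    classMeans Nc (classIndicator Nc) = 1 := by
  ext i j
  rcases eq_or_ne i j with rfl | hij
  · simp [classMeans, classIndicator, (hNc i).ne']
  · simp [classMeans, classIndicator, hij]

lemma classMeans_deltaX (hNc : ∀ j, 0 < Nc j) (X : Matrix (Fin M) (Idx Q Nc) ℝ) :
    classMeans Nc (deltaX Nc X) = 0 := by
  rw [← mul_calN_inv_mul_classIndicator_transpose, deltaX, Matrix.sub_mul, Matrix.sub_mul,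
    mul_calN_inv_mul_classIndicator_transpose, mul_calN_inv_mul_classIndicator_transpose,
    barX_eq_classMeans_mul_classIndicator, classMeans_mul, classMeans_classIndicator hNc,
    Matrix.mul_one, sub_self]

lemma classMeans_Del1 (hNc : ∀ j, 0 < Nc j) (X₀ : Matrix (Fin Q) (Idx Q Nc) ℝ) :
    classMeans Nc (Del1 Nc X₀) = 0 := by
  rw [Del1, classMeans_mul, classMeans_deltaX hNc, Matrix.mul_zero]

lemma l2N_sq (A : Matrix (Fin M) (Idx Q Nc) ℝ) :
    l2N Nc A ^ 2 = trace (A * (calN Q Nc)⁻¹ * Aᵀ) :=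
  Real.sq_sqrt (posSemidef_calN_inv.mul_mul_conjTranspose_same A).trace_nonneg

end ClassMeans

section Residual

variable {Q : ℕ} {Nc : Fin Q → ℕ} {X₀ : Matrix (Fin Q) (Idx Q Nc) ℝ}

lemma posSemidef_Del2 : (Del2 Nc X₀).PosSemidef :=
  posSemidef_calN_inv.mul_mul_conjTranspose_same (Del1 Nc X₀)

lemma isUnit_one_add_Del2 : IsUnit (1 + Del2 Nc X₀) :=
  (PosDef.one.add_posSemidef posSemidef_Del2).isUnit

lemma l2N_mul_Del1_sq (Y : Matrix (Fin Q) (Fin Q) ℝ) :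
    l2N Nc (Y * Del1 Nc X₀) ^ 2 = trace (Y * Del2 Nc X₀ * Yᵀ) := by
  simp only [l2N_sq, Del2, transpose_mul, Matrix.mul_assoc]

lemma classMeans_mul_classIndicator_add_Del1 (hred : IsUnit (classMeans Nc X₀)) :
    classMeans Nc X₀ * (classIndicator Nc + Del1 Nc X₀) = X₀ := by
  rw [Matrix.mul_add, ← barX_eq_classMeans_mul_classIndicator, Del1,
    mul_nonsing_inv_cancel_left _ _ ((Matrix.isUnit_iff_isUnit_det _).1 hred), deltaX,
    add_sub_cancel]

lemma Pmat_eq_rowSpaceProj (hred : IsUnit (classMeans Nc X₀)) :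
    Pmat Nc X₀ = rowSpaceProj (calN Q Nc)⁻¹ (classIndicator Nc + Del1 Nc X₀) := by
  rw [← rowSpaceProj_unit_mul hred, classMeans_mul_classIndicator_add_Del1 hred]
  rfl

lemma classIndicator_add_Del1_mul_classIndicator_transpose (hNc : ∀ j, 0 < Nc j) :
    (classIndicator Nc + Del1 Nc X₀) * (calN Q Nc)⁻¹ * (classIndicator Nc)ᵀ = 1 := by
  rw [Matrix.add_mul, Matrix.add_mul, mul_calN_inv_mul_classIndicator_transpose,
    mul_calN_inv_mul_classIndicator_transpose, classMeans_classIndicator hNc,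
    classMeans_Del1 hNc, add_zero]

lemma classIndicator_mul_classIndicator_add_Del1_transpose (hNc : ∀ j, 0 < Nc j) :
    classIndicator Nc * (calN Q Nc)⁻¹ * (classIndicator Nc + Del1 Nc X₀)ᵀ = 1 := by
  have h := congrArg transpose
    (classIndicator_add_Del1_mul_classIndicator_transpose (X₀ := X₀) hNc)
  simpa only [transpose_mul, transpose_transpose, isSymm_calN_inv.eq, transpose_one,
    Matrix.mul_assoc] using h

lemma gram_classIndicator_add_Del1 (hNc : ∀ j, 0 < Nc j) :
    (classIndicator Nc + Del1 Nc X₀) * (calN Q Nc)⁻¹ * (classIndicator Nc + Del1 Nc X₀)ᵀ =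
      1 + Del2 Nc X₀ := by
  have hcross : Del1 Nc X₀ * (calN Q Nc)⁻¹ * (classIndicator Nc)ᵀ = 0 := by
    rw [mul_calN_inv_mul_classIndicator_transpose, classMeans_Del1 hNc]
  rw [Matrix.add_mul, Matrix.add_mul, classIndicator_mul_classIndicator_add_Del1_transpose hNc,
    transpose_add, Matrix.mul_add, hcross, zero_add, Del2]

lemma classIndicator_mul_Pmat_mul (hNc : ∀ j, 0 < Nc j) (hred : IsUnit (classMeans Nc X₀)) :
    classIndicator Nc * Pmat Nc X₀ * (calN Q Nc)⁻¹ * (classIndicator Nc)ᵀ =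
      (1 + Del2 Nc X₀)⁻¹ := by
  calc classIndicator Nc * Pmat Nc X₀ * (calN Q Nc)⁻¹ * (classIndicator Nc)ᵀ
      = classIndicator Nc * (calN Q Nc)⁻¹ * (classIndicator Nc + Del1 Nc X₀)ᵀ *
          (1 + Del2 Nc X₀)⁻¹ *
          ((classIndicator Nc + Del1 Nc X₀) * (calN Q Nc)⁻¹ * (classIndicator Nc)ᵀ) := by
        rw [Pmat_eq_rowSpaceProj hred, rowSpaceProj, gram_classIndicator_add_Del1 hNc]
        simp only [Matrix.mul_assoc]
    _ = (1 + Del2 Nc X₀)⁻¹ := by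
        rw [classIndicator_mul_classIndicator_add_Del1_transpose hNc,
          classIndicator_add_Del1_mul_classIndicator_transpose hNc, Matrix.one_mul,
          Matrix.mul_one]

lemma classIndicator_mul_one_sub_Pmat_mul (hNc : ∀ j, 0 < Nc j) (hred : IsUnit (classMeans Nc X₀)) :
    classIndicator Nc * (1 - Pmat Nc X₀) * (calN Q Nc)⁻¹ * (classIndicator Nc)ᵀ =
      Del2 Nc X₀ * (1 + Del2 Nc X₀)⁻¹ := by
  calc classIndicator Nc * (1 - Pmat Nc X₀) * (calN Q Nc)⁻¹ * (classIndicator Nc)ᵀ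
      = 1 - (1 + Del2 Nc X₀)⁻¹ := by
        rw [Matrix.mul_sub, Matrix.sub_mul, Matrix.sub_mul, Matrix.mul_one,
          mul_calN_inv_mul_classIndicator_transpose, classMeans_classIndicator hNc,
          classIndicator_mul_Pmat_mul hNc hred]
    _ = ((1 + Del2 Nc X₀) - 1) * (1 + Del2 Nc X₀)⁻¹ := by
        rw [Matrix.sub_mul, Matrix.one_mul,
          mul_nonsing_inv _ ((Matrix.isUnit_iff_isUnit_det _).1 isUnit_one_add_Del2)]
    _ = Del2 Nc X₀ * (1 + Del2 Nc X₀)⁻¹ := by rw [add_sub_cancel_left]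

theorem l2N_Yext_mul_one_sub_Pmat_sq (hNc : ∀ j, 0 < Nc j) (hred : IsUnit (classMeans Nc X₀))
    (Y : Matrix (Fin Q) (Fin Q) ℝ) :
    l2N Nc (Yext Nc Y * (1 - Pmat Nc X₀)) ^ 2 =
      trace (Y * Del2 Nc X₀ * (1 + Del2 Nc X₀)⁻¹ * Yᵀ) := by
  have hres : (1 - Pmat Nc X₀) * (calN Q Nc)⁻¹ * (1 - Pmat Nc X₀)ᵀ =
      (1 - Pmat Nc X₀) * (calN Q Nc)⁻¹ := by
    rw [Pmat_eq_rowSpaceProj hred]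
    refine one_sub_rowSpaceProj_mul_mul_transpose isSymm_calN_inv ?_
    rw [gram_classIndicator_add_Del1 hNc]
    exact isUnit_one_add_Del2
  have hquad : Yext Nc Y * (1 - Pmat Nc X₀) * (calN Q Nc)⁻¹ *
      (Yext Nc Y * (1 - Pmat Nc X₀))ᵀ = Y * Del2 Nc X₀ * (1 + Del2 Nc X₀)⁻¹ * Yᵀ := calc
    _ = Y * (classIndicator Nc *
          ((1 - Pmat Nc X₀) * (calN Q Nc)⁻¹ * (1 - Pmat Nc X₀)ᵀ) * (classIndicator Nc)ᵀ) * Yᵀ := by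
      simp only [Yext_eq_mul_classIndicator, transpose_mul, Matrix.mul_assoc]
    _ = Y * (Del2 Nc X₀ * (1 + Del2 Nc X₀)⁻¹) * Yᵀ := by
      rw [hres, ← classIndicator_mul_one_sub_Pmat_mul hNc hred]
      simp only [Matrix.mul_assoc]
    _ = _ := by simp only [Matrix.mul_assoc]
  rw [l2N_sq, hquad]

end Residual

/-- For `M = Q` with `X̄₀^red` invertible and `λ₋` the smallest eigenvalue of
the positive semidefinite symmetric matrix `Δ₂^rel`:
`λ₋ ≥ 0`, `‖(1 + Δ₂^rel)⁻¹‖_op = (1 + λ₋)⁻¹ ≤ 1`,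
`Tr(Y·Δ₂^rel·(1 + Δ₂^rel)⁻¹·Yᵀ) ≤ (1 + λ₋)⁻¹·‖Y·Δ₁^rel‖²_{L²_𝒩}`, and consequently
`‖Y^ext𝒫^⊥‖_{L²_𝒩} ≤ ‖Y·(X̄₀^red)⁻¹·ΔX₀‖_{L²_𝒩}`. -/
theorem statement13 {Q : ℕ} (Nc : Fin Q → ℕ) (hNc : ∀ j, 0 < Nc j)
    (X₀ : Matrix (Fin Q) (Idx Q Nc) ℝ)
    (hred : IsUnit (classMeans Nc X₀))
    (Y : Matrix (Fin Q) (Fin Q) ℝ)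
    (lam : ℝ) (hlam : IsLeast (spectrum ℝ (Del2 Nc X₀)) lam) :
    0 ≤ lam ∧
    opNorm ((1 + Del2 Nc X₀)⁻¹) = (1 + lam)⁻¹ ∧
    (1 + lam)⁻¹ ≤ 1 ∧
    Matrix.trace (Y * Del2 Nc X₀ * (1 + Del2 Nc X₀)⁻¹ * Yᵀ) ≤
      (1 + lam)⁻¹ * (l2N Nc (Y * Del1 Nc X₀)) ^ 2 ∧
    l2N Nc (Yext Nc Y * (1 - Pmat Nc X₀)) ≤
      l2N Nc (Y * (classMeans Nc X₀)⁻¹ * deltaX Nc X₀) := by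
  have hlam0 : 0 ≤ lam :=
    (posSemidef_iff_isHermitian_and_spectrum_nonneg.1 posSemidef_Del2).2 hlam.1
  have hD : (Del2 Nc X₀).IsHermitian := posSemidef_Del2.isHermitian
  have hinv_le : (1 + lam)⁻¹ ≤ 1 := inv_le_one_of_one_le₀ (by linarith)
  have htrace : trace (Y * Del2 Nc X₀ * (1 + Del2 Nc X₀)⁻¹ * Yᵀ) ≤
      (1 + lam)⁻¹ * l2N Nc (Y * Del1 Nc X₀) ^ 2 := by
    rw [l2N_mul_Del1_sq]
    exact trace_mul_inv_one_add_le hD hlam.2 hlam0 Y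
  refine ⟨hlam0, opNorm_inv_one_add hD hlam (by linarith), hinv_le, htrace, ?_⟩
  rw [Matrix.mul_assoc]
  refine le_of_sq_le_sq ?_ (Real.sqrt_nonneg _)
  calc l2N Nc (Yext Nc Y * (1 - Pmat Nc X₀)) ^ 2
      = trace (Y * Del2 Nc X₀ * (1 + Del2 Nc X₀)⁻¹ * Yᵀ) := l2N_Yext_mul_one_sub_Pmat_sq hNc hred Y
    _ ≤ (1 + lam)⁻¹ * l2N Nc (Y * Del1 Nc X₀) ^ 2 := htrace
    _ ≤ l2N Nc (Y * Del1 Nc X₀) ^ 2 := mul_le_of_le_one_left (sq_nonneg _) hinv_le
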